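/- Let 𝔏 be a complex Hilbert space, A an injective positive bounded operator on 𝔏, λ a nonzero complex number, and ι : ℓ²(ℕ,𝔏) → ℓ²(ℤ,𝔏) the canonical isometric embedding (extending a sequence by 0 on negative indices). Then for a bounded operator X on ℓ²(ℕ,𝔏) the following are equivalent: (1) there exists a bounded operator X̂ on ℓ²(ℤ,𝔏) with X̂∘ι = ι∘X and (A⊗U)∘X̂ = λ·(X̂∘(A⊗U)); (2) (A⊗I)∘X = |λ|·(X∘(A⊗I)) and (I⊗S)∘X = (λ/|λ|)·(X∘(I⊗S)), where A⊗I is the operator on ℓ²(ℕ,𝔏) given by ((A⊗I)x)ₙ = A xₙ and I⊗S is the shift ((I⊗S)x)₀ = 0, ((I⊗S)x)ₙ₊₁ = xₙ. -/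

import Mathlib

open ContinuousLinearMap

noncomputable section

/-- The modulus `|T| = (T*T)^(1/2)` of a bounded operator on a complex Hilbert space. -/
def modulus {H : Type*} [NormedAddCommGroup H] [InnerProductSpace ℂ H] [CompleteSpace H]
    (T : H →L[ℂ] H) : H →L[ℂ] H :=
  CFC.sqrt (adjoint T ∘L T)

/-- A bounded operator is quasinormal if it commutes with its modulus. -/
def IsQuasinormal {H : Type*} [NormedAddCommGroup H] [InnerProductSpace ℂ H] [CompleteSpace H]
    (T : H →L[ℂ] H) : Prop :=
  T ∘L modulus T = modulus T ∘L T

/-- `m_T = inf {⟨Tx,x⟩ : ‖x‖ = 1}` (real part of the inner product). -/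
def mval {H : Type*} [NormedAddCommGroup H] [InnerProductSpace ℂ H]
    (T : H →L[ℂ] H) : ℝ :=
  sInf {r : ℝ | ∃ x : H, ‖x‖ = 1 ∧ r = T.reApplyInnerSelf x}

/-- The set of intertwining values `Λ_int(R,M)`. -/
def intertwiningValues {H K : Type*} [NormedAddCommGroup H] [InnerProductSpace ℂ H]
    [NormedAddCommGroup K] [InnerProductSpace ℂ K]
    (R : H →L[ℂ] H) (M : K →L[ℂ] K) : Set ℂ :=
  {l : ℂ | ∃ X : K →L[ℂ] H, X ≠ 0 ∧ R ∘L X = l • (X ∘L M)}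

/-- The set of extended eigenvalues `σ_ext(T)`. -/
def extSpectrum {H : Type*} [NormedAddCommGroup H] [InnerProductSpace ℂ H]
    (T : H →L[ℂ] H) : Set ℂ :=
  {l : ℂ | ∃ X : H →L[ℂ] H, X ≠ 0 ∧ T ∘L X = l • (X ∘L T)}

/-- The set `𝒜_r(R,A)` of operators `L` with `‖Rⁿ(Lx)‖ ≤ c·rⁿ·‖Aⁿx‖` for all `n, x`. -/
def calA {H 𝔏 : Type*} [NormedAddCommGroup H] [InnerProductSpace ℂ H]
    [NormedAddCommGroup 𝔏] [InnerProductSpace ℂ 𝔏]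
    (r : ℝ) (R : H →L[ℂ] H) (A : 𝔏 →L[ℂ] 𝔏) : Set (𝔏 →L[ℂ] H) :=
  {L : 𝔏 →L[ℂ] H | ∃ c : ℝ, 0 ≤ c ∧
    ∀ (n : ℕ) (x : 𝔏), ‖(R ^ n) (L x)‖ ≤ c * r ^ n * ‖(A ^ n) x‖}

/-- An operator is pure if it has no nonzero reducing subspace on which it is normal. -/
def IsPure {H : Type*} [NormedAddCommGroup H] [InnerProductSpace ℂ H] [CompleteSpace H]
    (T : H →L[ℂ] H) : Prop :=
  ∀ M : Submodule ℂ H, IsClosed (M : Set H) → (∀ x ∈ M, T x ∈ M) →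
    (∀ x ∈ M, adjoint T x ∈ M) →
    (∀ x ∈ M, T (adjoint T x) = adjoint T (T x)) → M = ⊥

universe u

/-- An operator is subnormal if it has a normal extension on a larger Hilbert space. -/
def IsSubnormal {F : Type*} [NormedAddCommGroup F] [InnerProductSpace ℂ F] [CompleteSpace F]
    (T : F →L[ℂ] F) : Prop :=
  ∃ (K : Type u) (_ : NormedAddCommGroup K) (_ : InnerProductSpace ℂ K) (_ : CompleteSpace K)
    (j : F →ₗᵢ[ℂ] K) (M : K →L[ℂ] K),
      adjoint M ∘L M = M ∘L adjoint M ∧ ∀ x : F, M (j x) = j (T x)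

end

/-!
Write `A ⊗ U = C V` with `V = I ⊗ U` the bilateral shift and `C = A ⊗ I`: this is the polar
decomposition of a normal operator. If `C V Y = l Y C V`, the Fuglede–Putnam theorem gives the
adjoint relation, so `Y` intertwines the moduli, `C Y = |l| Y C`; cancelling the injective `C`
leaves `V Y = (l / |l|) Y V`. Both relations restrict to `ℓ²(ℕ, 𝔏)`.

Conversely, put `μ = l / |l|` and let `ι` be the embedding. If `S X = μ X S`, then the operators
`μⁿ V⁻ⁿ (ι X ι*) Vⁿ` are uniformly bounded and eventually constant on each `V⁻ᵏ ι ℓ²(ℕ, 𝔏)`. These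
subspaces have dense union, so the operators converge strongly, and the limit is the required lift.
-/

open Filter Topology

section CStarAlgebra

section NonUnital

variable {𝒜 : Type*} [NonUnitalCStarAlgebra 𝒜] [PartialOrder 𝒜] [StarOrderedRing 𝒜] {a b x z : 𝒜}

theorem mul_eq_zero_of_mul_eq_neg_mul (ha : 0 ≤ a) (hb : 0 ≤ b) (h : b * z = -(z * a)) :
    z * a = 0 := by
  have conj_eq : star z * b * z = -(star z * z * a) := by
    rw [mul_assoc, h, mul_neg, mul_assoc]
  have conj_nonneg : 0 ≤ star z * b * z := star_left_conjugate_nonneg hb z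
  have commute_a : Commute (star z * z) a := by
    have self_adjoint : IsSelfAdjoint (star z * z * a) := by
      rw [← neg_neg (star z * z * a), ← conj_eq]
      exact conj_nonneg.isSelfAdjoint.neg
    exact ((IsSelfAdjoint.star_mul_self z).commute_iff ha.isSelfAdjoint).2 self_adjoint
  have mul_eq_zero : star z * z * a = 0 := by
    refine le_antisymm ?_ (commute_a.mul_nonneg (star_mul_self_nonneg z) ha)
    simpa [conj_eq] using conj_nonneg
  apply (CStarRing.star_mul_self_eq_zero_iff (z * a)).1
  rw [star_mul, mul_assoc, ← mul_assoc (star z), mul_eq_zero, mul_zero]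

theorem semiconjBy_of_mul_self (ha : 0 ≤ a) (hb : 0 ≤ b) (h : SemiconjBy x (a * a) (b * b)) :
    SemiconjBy x a b := by
  have ha' : star a = a := ha.isSelfAdjoint
  have hb' : star b = b := hb.isSelfAdjoint
  set z := b * x - x * a with hz
  have hbz : b * z = -(z * a) := by
    rw [hz, mul_sub, sub_mul, ← mul_assoc, ← h.eq]
    noncomm_ring
  have hza : z * a = 0 := mul_eq_zero_of_mul_eq_neg_mul ha hb hbz
  have haz : a * star z = 0 := by simpa [ha'] using congr(star $hza)
  have hzb : star z * b = 0 := by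
    simpa [hza, hb'] using congr(star $hbz)
  -- `z* z = z* b x - z* x a` where the first term vanishes, and `a z* = 0` kills the other after
  -- multiplying by `z* z` once more.
  have hzz : star z * z = -(star z * x * a) := by
    rw [hz, mul_sub, ← mul_assoc, ← hz, hzb, zero_mul, zero_sub, mul_assoc]
  have hsq : star (star z * z) * (star z * z) = 0 := by
    rw [star_mul, star_star]
    nth_rw 1 [hzz]
    rw [neg_mul, mul_assoc, ← mul_assoc a, haz, zero_mul, mul_zero, neg_zero]
  have hz0 : z = 0 := by
    simpa only [CStarRing.star_mul_self_eq_zero_iff] using hsq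
  exact (sub_eq_zero.1 hz0).symm

theorem semiconjBy_cfcAbs (ha : IsStarNormal a) (hb : IsStarNormal b) (h : SemiconjBy x a b) :
    SemiconjBy x (CFC.abs a) (CFC.abs b) := by
  apply semiconjBy_of_mul_self (CFC.abs_nonneg a) (CFC.abs_nonneg b)
  rw [CFC.abs_mul_abs, CFC.abs_mul_abs]
  exact (h.star_right ha hb).mul_right h

end NonUnital

theorem isStarNormal_mul {R : Type*} [Semigroup R] [StarMul R] {a b : R} (ha : IsStarNormal a)
    (hb : IsStarNormal b) (hab : Commute a (star b)) : IsStarNormal (a * b) := by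
  constructor
  rw [star_mul]
  exact (hab.symm.mul_right hb.star_comm_self).mul_left
    (ha.star_comm_self.mul_right hab.star_left)

variable {𝒜 : Type*} [CStarAlgebra 𝒜] [PartialOrder 𝒜] [StarOrderedRing 𝒜] {c u y : 𝒜} {l : ℂ}

theorem nonneg_mul_eq_norm_smul_mul (hc : 0 ≤ c) (hu : u ∈ unitary 𝒜) (hcu : Commute c u)
    (h : c * u * y = l • (y * (c * u))) : c * y = (‖l‖ : ℂ) • (y * c) := by
  have hcu' : Commute c (star u) := by
    simpa [hc.isSelfAdjoint.star_eq] using hcu.star_star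
  have hnormal : IsStarNormal (c * u) :=
    isStarNormal_mul hc.isSelfAdjoint.isStarNormal (Unitary.coe_isStarNormal ⟨u, hu⟩) hcu'
  have habs : CFC.abs (c * u) = c := by
    rw [hcu.cfcAbs_mul_eq hcu', CFC.abs_of_nonneg c hc, CFC.abs_of_mem_unitary hu, mul_one]
  have hsemiconj : SemiconjBy y (l • (c * u)) (c * u) := by
    rw [SemiconjBy, h, mul_smul_comm]
  have := semiconjBy_cfcAbs inferInstance hnormal hsemiconj
  rw [CFC.abs_smul, habs] at this
  rw [← this.eq, mul_smul_comm, Complex.coe_smul]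

theorem unitary_mul_eq_div_norm_smul_mul (hc : 0 ≤ c) (hc' : IsLeftRegular c) (hu : u ∈ unitary 𝒜)
    (hcu : Commute c u) (hl : l ≠ 0) (h : c * u * y = l • (y * (c * u))) :
    u * y = (l / (‖l‖ : ℂ)) • (y * u) := by
  have hl' : (‖l‖ : ℂ) ≠ 0 := by simpa using hl
  apply hc'
  calc c * (u * y) = l • (y * c * u) := by rw [← mul_assoc, h, mul_assoc]
    _ = (l / (‖l‖ : ℂ)) • ((‖l‖ : ℂ) • (y * c) * u) := by
      rw [smul_mul_assoc, smul_smul, div_mul_cancel₀ l hl']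
    _ = c * ((l / (‖l‖ : ℂ)) • (y * u)) := by
      rw [← nonneg_mul_eq_norm_smul_mul hc hu hcu h, mul_smul_comm, mul_assoc]

end CStarAlgebra

section StrongLimit

variable {𝕜 E F : Type*} [NontriviallyNormedField 𝕜] [NormedAddCommGroup E] [NormedSpace 𝕜 E]
  [NormedAddCommGroup F] [NormedSpace 𝕜 F]

/-- The subspace on which a sequence of operators is pointwise Cauchy, that is, the domain of its
strong limit when the codomain is complete. -/
def cauchySubmodule (Q : ℕ → E →L[𝕜] F) : Submodule 𝕜 E where
  carrier := {x | CauchySeq fun n => Q n x}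
  zero_mem' := by simpa using cauchySeq_const (0 : F)
  add_mem' hx hy := by simpa only [Set.mem_ofPred_eq, map_add] using! hx.add hy
  smul_mem' c x hx := by
    simpa only [Set.mem_ofPred_eq, map_smul] using!
      (uniformContinuous_const_smul c).comp_cauchySeq hx

theorem mem_cauchySubmodule {Q : ℕ → E →L[𝕜] F} {x : E} :
    x ∈ cauchySubmodule Q ↔ CauchySeq fun n => Q n x :=
  Iff.rfl

theorem isClosed_cauchySubmodule {Q : ℕ → E →L[𝕜] F} {M : ℝ} (hQ : ∀ n, ‖Q n‖ ≤ M) :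
    IsClosed (cauchySubmodule Q : Set E) := by
  have hM : 0 ≤ M := (norm_nonneg _).trans (hQ 0)
  refine isClosed_of_closure_subset fun x hx => Metric.cauchySeq_iff'.2 fun ε hε => ?_
  obtain ⟨y, hy, hxy⟩ := Metric.mem_closure_iff.1 hx (ε / (3 * (M + 1))) (by positivity)
  obtain ⟨N, hN⟩ := Metric.cauchySeq_iff'.1 (mem_cauchySubmodule.1 hy) (ε / 3) (by positivity)
  have dist_lt (n : ℕ) : dist (Q n x) (Q n y) < ε / 3 := by
    calc dist (Q n x) (Q n y) ≤ M * dist x y := by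
          rw [dist_eq_norm, dist_eq_norm, ← map_sub]
          exact (Q n).le_of_opNorm_le (hQ n) _
      _ ≤ (M + 1) * dist x y := by gcongr; linarith
      _ < ε / 3 := by
        rw [lt_div_iff₀ (by positivity)] at hxy
        linarith
  refine ⟨N, fun n hn => ?_⟩
  calc dist (Q n x) (Q N x)
      ≤ dist (Q n x) (Q n y) + dist (Q n y) (Q N y) + dist (Q N y) (Q N x) := dist_triangle4 ..
    _ < ε / 3 + ε / 3 + ε / 3 := by
      gcongr
      · exact dist_lt n
      · exact hN n hn
      · rw [dist_comm]
        exact dist_lt N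
    _ = ε := by ring

theorem exists_tendsto_of_cauchySubmodule_eq_top [CompleteSpace E] [CompleteSpace F]
    {Q : ℕ → E →L[𝕜] F} (hQ : cauchySubmodule Q = ⊤) :
    ∃ Y : E →L[𝕜] F, ∀ x, Tendsto (fun n => Q n x) atTop (𝓝 (Y x)) := by
  have hcauchy (x : E) : CauchySeq fun n => Q n x :=
    mem_cauchySubmodule.1 (hQ ▸ Submodule.mem_top)
  choose f hf using fun x => cauchySeq_tendsto_of_complete (hcauchy x)
  exact ⟨continuousLinearMapOfTendsto Q (tendsto_pi_nhds.2 hf), hf⟩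

end StrongLimit

section TwistedConj

variable {𝕜 H : Type*} [NontriviallyNormedField 𝕜] [NormedAddCommGroup H] [NormedSpace 𝕜 H]

/-- The map `Z ↦ μ V⁻¹ Z V`, whose fixed points are the `Z` with `V Z = μ Z V`. -/
def twistedConj (V : H ≃ₗᵢ[𝕜] H) (μ : 𝕜) (Z : H →L[𝕜] H) : H →L[𝕜] H :=
  μ • ((V.symm : H →L[𝕜] H) ∘L Z ∘L (V : H →L[𝕜] H))

theorem twistedConj_apply (V : H ≃ₗᵢ[𝕜] H) (μ : 𝕜) (Z : H →L[𝕜] H) (x : H) :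
    twistedConj V μ Z x = μ • V.symm (Z (V x)) :=
  rfl

theorem iterate_succ_twistedConj_apply (V : H ≃ₗᵢ[𝕜] H) (μ : 𝕜) (Z : H →L[𝕜] H) (n : ℕ) (x : H) :
    (twistedConj V μ)^[n + 1] Z x = μ • V.symm ((twistedConj V μ)^[n] Z (V x)) := by
  rw [Function.iterate_succ_apply', twistedConj_apply]

theorem norm_iterate_twistedConj_le (V : H ≃ₗᵢ[𝕜] H) {μ : 𝕜} (hμ : ‖μ‖ ≤ 1) (Z : H →L[𝕜] H)
    (n : ℕ) : ‖(twistedConj V μ)^[n] Z‖ ≤ ‖Z‖ := by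
  induction n with
  | zero => rfl
  | succ n ih =>
    refine ContinuousLinearMap.opNorm_le_bound _ (norm_nonneg Z) fun x => ?_
    rw [iterate_succ_twistedConj_apply, norm_smul, V.symm.norm_map]
    calc ‖μ‖ * ‖(twistedConj V μ)^[n] Z (V x)‖ ≤ 1 * (‖Z‖ * ‖V x‖) := by
          gcongr
          exact ContinuousLinearMap.le_of_opNorm_le _ ih _
      _ = ‖Z‖ * ‖x‖ := by rw [one_mul, V.norm_map]

end TwistedConj

theorem comp_eq_smul_comp_of_lift {R M N : Type*} [CommSemiring R]
    [TopologicalSpace M] [AddCommMonoid M] [Module R M] [ContinuousConstSMul R M]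
    [TopologicalSpace N] [AddCommMonoid N] [Module R N] [ContinuousConstSMul R N]
    {ι : M →L[R] N} (hι : Function.Injective ι) {B X : M →L[R] M} {C Y : N →L[R] N}
    (hB : ∀ s, C (ι s) = ι (B s)) (hX : ∀ s, Y (ι s) = ι (X s)) {r : R}
    (h : C ∘L Y = r • (Y ∘L C)) : B ∘L X = r • (X ∘L B) := by
  ext s
  apply hι
  simpa [hB, hX] using congr($h (ι s))

section MinimalUnitaryExtension

section RCLike

variable {𝕜 H K : Type*} [RCLike 𝕜] [NormedAddCommGroup H] [InnerProductSpace 𝕜 H]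
  [NormedAddCommGroup K] [InnerProductSpace 𝕜 K]
  {ι : K →ₗᵢ[𝕜] H} {S X : K →L[𝕜] K} {V : H ≃ₗᵢ[𝕜] H}

/-- `V` is a minimal unitary extension of the isometry `S` along the embedding `ι`. Minimality, that
is, density of `⋃ n, V⁻ⁿ (ι K)`, is stated as an induction principle for closed subspaces. -/
structure IsMinimalUnitaryExtension (ι : K →ₗᵢ[𝕜] H) (S : K →L[𝕜] K) (V : H ≃ₗᵢ[𝕜] H) :
    Prop where
  map_apply : ∀ s, V (ι s) = ι (S s)
  eq_top_of_isClosed : ∀ p : Submodule 𝕜 H, IsClosed (p : Set H) → (∀ s, ι s ∈ p) →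
    (∀ x ∈ p, V.symm x ∈ p) → p = ⊤

namespace IsMinimalUnitaryExtension

theorem iterate_twistedConj_apply (hV : IsMinimalUnitaryExtension ι S V) {μ : 𝕜}
    (hX : S ∘L X = μ • (X ∘L S)) {Z : H →L[𝕜] H} (hZ : ∀ s, Z (ι s) = ι (X s)) (n : ℕ) (s : K) :
    (twistedConj V μ)^[n] Z (ι s) = ι (X s) := by
  induction n generalizing s with
  | zero => exact hZ s
  | succ n ih =>
    have hXs : S (X s) = μ • X (S s) := congr($hX s)
    rw [iterate_succ_twistedConj_apply, hV.map_apply, ih, ← map_smul, ← map_smul, ← hXs,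
      ← hV.map_apply, V.symm_apply_apply]

theorem cauchySubmodule_iterate_twistedConj (hV : IsMinimalUnitaryExtension ι S V) {μ : 𝕜}
    (hμ : ‖μ‖ ≤ 1) (hX : S ∘L X = μ • (X ∘L S)) {Z : H →L[𝕜] H} (hZ : ∀ s, Z (ι s) = ι (X s)) :
    cauchySubmodule (fun n => (twistedConj V μ)^[n] Z) = ⊤ := by
  refine hV.eq_top_of_isClosed _
    (isClosed_cauchySubmodule (norm_iterate_twistedConj_le V hμ Z)) (fun s => ?_) fun x hx => ?_
  · simpa only [mem_cauchySubmodule, hV.iterate_twistedConj_apply hX hZ] using cauchySeq_const _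
  · rw [mem_cauchySubmodule, ← cauchySeq_shift 1]
    simp only [iterate_succ_twistedConj_apply, V.apply_symm_apply]
    exact ((uniformContinuous_const_smul μ).comp V.symm.isometry.uniformContinuous).comp_cauchySeq
      hx

theorem exists_lift [CompleteSpace H] [CompleteSpace K] (hV : IsMinimalUnitaryExtension ι S V)
    {μ : 𝕜} (hμ : ‖μ‖ ≤ 1) (hX : S ∘L X = μ • (X ∘L S)) :
    ∃ Y : H →L[𝕜] H, (∀ s, Y (ι s) = ι (X s)) ∧ V ∘L Y = μ • (Y ∘L V) := by
  let Z : H →L[𝕜] H := ι.toContinuousLinearMap ∘L X ∘L ι.toContinuousLinearMap.adjoint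
  have hZ (s : K) : Z (ι s) = ι (X s) :=
    congr(ι (X ($(ι.adjoint_comp_self) s)))
  obtain ⟨Y, hY⟩ := exists_tendsto_of_cauchySubmodule_eq_top
    (hV.cauchySubmodule_iterate_twistedConj hμ hX hZ)
  refine ⟨Y, fun s => ?_, ?_⟩
  · refine tendsto_nhds_unique (hY (ι s)) ?_
    simpa only [hV.iterate_twistedConj_apply hX hZ] using tendsto_const_nhds
  · have fixed (x : H) : Y x = μ • V.symm (Y (V x)) := by
      refine tendsto_nhds_unique ((tendsto_add_atTop_iff_nat 1).2 (hY x)) ?_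
      simp only [iterate_succ_twistedConj_apply]
      exact ((V.symm.continuous.tendsto _).comp (hY (V x))).const_smul μ
    ext x
    change V (Y x) = μ • Y (V x)
    rw [fixed x, map_smul, V.apply_symm_apply]

theorem eq_zero_of_apply_eq_zero (hV : IsMinimalUnitaryExtension ι S V) {D : H →L[𝕜] H} {μ : 𝕜}
    (hι : ∀ s, D (ι s) = 0) (hVD : V ∘L D = μ • (D ∘L V)) : D = 0 := by
  have hker : D.ker = ⊤ := by
    refine hV.eq_top_of_isClosed _ D.isClosed_ker hι fun x hx => V.injective ?_
    have hDx : D x = 0 := hx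
    simpa [hDx] using congr($hVD (V.symm x))
  ext x
  exact LinearMap.mem_ker.1 (hker ▸ Submodule.mem_top : x ∈ D.ker)

theorem comp_eq_smul_comp (hV : IsMinimalUnitaryExtension ι S V) {B : K →L[𝕜] K}
    {C Y : H →L[𝕜] H} {μ r : 𝕜} (hCV : Commute C (V : H →L[𝕜] H)) (hB : ∀ s, C (ι s) = ι (B s))
    (hY : ∀ s, Y (ι s) = ι (X s)) (hVY : V ∘L Y = μ • (Y ∘L V)) (h : B ∘L X = r • (X ∘L B)) :
    C ∘L Y = r • (Y ∘L C) := by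
  have hCV' (x : H) : C (V x) = V (C x) := congr($hCV.eq x)
  have hVY' (x : H) : V (Y x) = μ • Y (V x) := congr($hVY x)
  refine sub_eq_zero.1 (hV.eq_zero_of_apply_eq_zero (μ := μ) (fun s => ?_) ?_)
  · have hBX : B (X s) = r • X (B s) := congr($h s)
    simp [hY, hB, hBX]
  · ext x
    simp [← hCV', hVY', smul_sub, smul_comm μ r]

end IsMinimalUnitaryExtension

end RCLike

variable {H K : Type*} [NormedAddCommGroup H] [InnerProductSpace ℂ H] [CompleteSpace H]
  [NormedAddCommGroup K] [InnerProductSpace ℂ K] {ι : K →ₗᵢ[ℂ] H} {S X B : K →L[ℂ] K}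
  {V : H ≃ₗᵢ[ℂ] H} {C : H →L[ℂ] H} {l : ℂ}

namespace IsMinimalUnitaryExtension

theorem intertwines_of_lift (hV : IsMinimalUnitaryExtension ι S V) (hC : C.IsPositive)
    (hCinj : Function.Injective C) (hCV : Commute C (V : H →L[ℂ] H))
    (hB : ∀ s, C (ι s) = ι (B s)) (hl : l ≠ 0) {Y : H →L[ℂ] H} (hY : ∀ s, Y (ι s) = ι (X s))
    (h : (C ∘L V) ∘L Y = l • (Y ∘L (C ∘L V))) :
    B ∘L X = (‖l‖ : ℂ) • (X ∘L B) ∧ S ∘L X = (l / (‖l‖ : ℂ)) • (X ∘L S) := by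
  have hC₀ : 0 ≤ C := C.nonneg_iff_isPositive.2 hC
  have hCreg : IsLeftRegular C := fun D₁ D₂ hD => by
    ext x
    exact hCinj congr($hD x)
  have hVunitary : (V : H →L[ℂ] H) ∈ unitary (H →L[ℂ] H) :=
    (Unitary.linearIsometryEquiv.symm V).property
  exact ⟨comp_eq_smul_comp_of_lift (ι := ι.toContinuousLinearMap) ι.injective hB hY
      (nonneg_mul_eq_norm_smul_mul hC₀ hVunitary hCV h),
    comp_eq_smul_comp_of_lift (ι := ι.toContinuousLinearMap) ι.injective hV.map_apply hY
      (unitary_mul_eq_div_norm_smul_mul hC₀ hCreg hVunitary hCV hl h)⟩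

theorem exists_lift_of_intertwines [CompleteSpace K] (hV : IsMinimalUnitaryExtension ι S V)
    (hCV : Commute C (V : H →L[ℂ] H)) (hB : ∀ s, C (ι s) = ι (B s)) (hl : l ≠ 0)
    (hBX : B ∘L X = (‖l‖ : ℂ) • (X ∘L B)) (hSX : S ∘L X = (l / (‖l‖ : ℂ)) • (X ∘L S)) :
    ∃ Y : H →L[ℂ] H, (∀ s, Y (ι s) = ι (X s)) ∧ (C ∘L V) ∘L Y = l • (Y ∘L (C ∘L V)) := by
  have hl' : (‖l‖ : ℂ) ≠ 0 := by simpa using hl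
  obtain ⟨Y, hY, hVY⟩ := hV.exists_lift (by simp [hl]) hSX
  have hCY : C ∘L Y = (‖l‖ : ℂ) • (Y ∘L C) := hV.comp_eq_smul_comp hCV hB hY hVY hBX
  refine ⟨Y, hY, ?_⟩
  calc (C ∘L V) ∘L Y = (l / (‖l‖ : ℂ)) • ((C ∘L Y) ∘L V) := by
        rw [ContinuousLinearMap.comp_assoc, hVY, ContinuousLinearMap.comp_smul,
          ContinuousLinearMap.comp_assoc]
    _ = l • (Y ∘L (C ∘L V)) := by
      rw [hCY, ContinuousLinearMap.smul_comp, smul_smul, div_mul_cancel₀ l hl',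
        ContinuousLinearMap.comp_assoc]

theorem exists_lift_iff [CompleteSpace K] (hV : IsMinimalUnitaryExtension ι S V)
    (hC : C.IsPositive) (hCinj : Function.Injective C) (hCV : Commute C (V : H →L[ℂ] H))
    (hB : ∀ s, C (ι s) = ι (B s)) (hl : l ≠ 0) :
    (∃ Y : H →L[ℂ] H, (∀ s, Y (ι s) = ι (X s)) ∧ (C ∘L V) ∘L Y = l • (Y ∘L (C ∘L V))) ↔
      B ∘L X = (‖l‖ : ℂ) • (X ∘L B) ∧ S ∘L X = (l / (‖l‖ : ℂ)) • (X ∘L S) :=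
  ⟨fun ⟨_, hY, h⟩ => hV.intertwines_of_lift hC hCinj hCV hB hl hY h,
    fun ⟨hBX, hSX⟩ => hV.exists_lift_of_intertwines hCV hB hl hBX hSX⟩

end IsMinimalUnitaryExtension

end MinimalUnitaryExtension

section SequenceSpaces

open scoped ENNReal

section Reindexing

variable {𝕜 α β E : Type*} [NormedAddCommGroup E] {p : ℝ≥0∞}

theorem memℓp_comp_equiv {f : α → E} (hf : Memℓp f p) (e : β ≃ α) : Memℓp (f ∘ e) p := by
  obtain rfl | rfl | hp := p.trichotomy
  · exact memℓp_zero ((memℓp_zero_iff.1 hf).preimage e.injective.injOn)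
  · rw [memℓp_infty_iff] at hf ⊢
    exact hf.mono (Set.range_comp_subset_range e fun i => ‖f i‖)
  · rw [memℓp_gen_iff hp] at hf ⊢
    exact e.summable_iff.2 hf

variable [NormedField 𝕜] [NormedSpace 𝕜 E] [Fact (1 ≤ p)]

variable (𝕜 E p) in
/-- Reindexing of `ℓ^p` along an equivalence of index types, as a linear isometry. -/
def lpCongrLeft (e : α ≃ β) : lp (fun _ : α => E) p ≃ₗᵢ[𝕜] lp (fun _ : β => E) p where
  toFun x := ⟨x ∘ e.symm, memℓp_comp_equiv (lp.memℓp x) e.symm⟩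
  invFun x := ⟨x ∘ e, memℓp_comp_equiv (lp.memℓp x) e⟩
  map_add' _ _ := rfl
  map_smul' _ _ := rfl
  left_inv x := by ext; simp
  right_inv x := by ext; simp
  norm_map' x := by
    obtain rfl | rfl | hp := p.trichotomy
    · exact absurd (Fact.out : (1 : ℝ≥0∞) ≤ 0) (by simp)
    · exact e.symm.iSup_comp (g := fun i => ‖x i‖)
    · rw [lp.norm_eq_tsum_rpow hp, lp.norm_eq_tsum_rpow hp]
      exact congr($(e.symm.tsum_eq fun i => ‖x i‖ ^ p.toReal) ^ (1 / p.toReal))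

variable (𝕜 E p) in
/-- The bilateral shift `(V x) n = x (n - 1)`. -/
def bilateralShift : lp (fun _ : ℤ => E) p ≃ₗᵢ[𝕜] lp (fun _ : ℤ => E) p :=
  lpCongrLeft 𝕜 E p (Equiv.addRight 1)

theorem bilateralShift_apply (x : lp (fun _ : ℤ => E) p) (n : ℤ) :
    bilateralShift 𝕜 E p x n = x (n - 1) :=
  rfl

theorem bilateralShift_symm_apply (x : lp (fun _ : ℤ => E) p) (n : ℤ) :
    (bilateralShift 𝕜 E p).symm x n = x (n + 1) :=
  rfl

end Reindexing

section Diagonal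

theorem isPositive_lp_diagonal {𝕜 α : Type*} [RCLike 𝕜] {E : α → Type*}
    [∀ i, NormedAddCommGroup (E i)] [∀ i, InnerProductSpace 𝕜 (E i)] {A : ∀ i, E i →L[𝕜] E i}
    (hA : ∀ i, (A i).IsPositive) {C : lp E 2 →L[𝕜] lp E 2} (hC : ∀ x i, C x i = A i (x i)) :
    C.IsPositive := by
  refine ⟨fun x y => ?_, fun x => ?_⟩
  · change inner 𝕜 (C x) y = inner 𝕜 x (C y)
    simp only [lp.inner_eq_tsum, hC, (hA _).inner_left_eq_inner_right]
  · refine ((lp.hasSum_inner (𝕜 := 𝕜) (C x) x).mapL RCLike.reCLM).nonneg fun i => ?_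
    simpa only [hC] using! (hA i).re_inner_nonneg_left (x i)

theorem injective_lp_diagonal {α : Type*} {E : α → Type*} [∀ i, NormedAddCommGroup (E i)]
    {p : ℝ≥0∞} {A : ∀ i, E i → E i} (hA : ∀ i, Function.Injective (A i)) {C : lp E p → lp E p}
    (hC : ∀ x i, C x i = A i (x i)) : Function.Injective C := by
  intro x y hxy
  ext i
  apply hA i
  rw [← hC, ← hC, hxy]

variable {𝕜 E : Type*} [NontriviallyNormedField 𝕜] [NormedAddCommGroup E] [NormedSpace 𝕜 E]
  {p : ℝ≥0∞} [Fact (1 ≤ p)]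

theorem commute_diagonal_bilateralShift {A : E → E}
    {C : lp (fun _ : ℤ => E) p →L[𝕜] lp (fun _ : ℤ => E) p} (hC : ∀ x n, C x n = A (x n)) :
    Commute C (bilateralShift 𝕜 E p : lp (fun _ : ℤ => E) p →L[𝕜] lp (fun _ : ℤ => E) p) := by
  ext x n
  change C (bilateralShift 𝕜 E p x) n = bilateralShift 𝕜 E p (C x) n
  rw [hC, bilateralShift_apply, bilateralShift_apply, hC]

theorem exists_diagonal_comp_bilateralShift {A : E → E}
    {T : lp (fun _ : ℤ => E) p →L[𝕜] lp (fun _ : ℤ => E) p} (hT : ∀ x n, T x n = A (x (n - 1))) :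
    ∃ C : lp (fun _ : ℤ => E) p →L[𝕜] lp (fun _ : ℤ => E) p,
      (∀ x n, C x n = A (x n)) ∧ C ∘L bilateralShift 𝕜 E p = T := by
  refine ⟨T ∘L ((bilateralShift 𝕜 E p).symm : lp (fun _ : ℤ => E) p →L[𝕜] _), fun x n => ?_, ?_⟩
  · change T ((bilateralShift 𝕜 E p).symm x) n = A (x n)
    rw [hT, bilateralShift_symm_apply, sub_add_cancel]
  · ext1 x
    exact congr(T $((bilateralShift 𝕜 E p).symm_apply_apply x))

end Diagonal

section Single

theorem eq_top_of_forall_single_mem {𝕜 α : Type*} [DecidableEq α] {E : α → Type*}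
    [∀ i, NormedAddCommGroup (E i)] [NormedRing 𝕜] [∀ i, Module 𝕜 (E i)]
    [∀ i, IsBoundedSMul 𝕜 (E i)] {p : ℝ≥0∞} [Fact (1 ≤ p)] (hp : p ≠ ∞) {q : Submodule 𝕜 (lp E p)}
    (hq : IsClosed (q : Set (lp E p))) (hsingle : ∀ i a, lp.single p i a ∈ q) : q = ⊤ :=
  eq_top_iff.2 fun x _ => hq.mem_of_tendsto (lp.hasSum_single hp x)
    (Eventually.of_forall fun _ => q.sum_mem fun i _ => hsingle i (x i))

theorem bilateralShift_symm_single {𝕜 E : Type*} [NormedField 𝕜] [NormedAddCommGroup E]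
    [NormedSpace 𝕜 E] {p : ℝ≥0∞} [Fact (1 ≤ p)] (n : ℤ) (a : E) :
    (bilateralShift 𝕜 E p).symm (lp.single p n a) = lp.single p (n - 1) a := by
  ext m
  rw [bilateralShift_symm_apply]
  simp [Pi.single_apply, eq_sub_iff_add_eq]

end Single

section ExtensionByZero

variable {E : Type*} [NormedAddCommGroup E] {p : ℝ≥0∞}

/-- `ι` is the canonical embedding of `ℕ`-indexed into `ℤ`-indexed sequences, characterized by its
coordinates. -/
structure IsExtensionByZero (ι : lp (fun _ : ℕ => E) p → lp (fun _ : ℤ => E) p) : Prop where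
  apply_natCast : ∀ (x : lp (fun _ : ℕ => E) p) (n : ℕ), ι x (n : ℤ) = x n
  apply_of_neg : ∀ (x : lp (fun _ : ℕ => E) p) (m : ℤ), m < 0 → ι x m = 0

namespace IsExtensionByZero

section Function

variable {ι : lp (fun _ : ℕ => E) p → lp (fun _ : ℤ => E) p}

theorem eq_apply (hι : IsExtensionByZero ι) {x : lp (fun _ : ℕ => E) p}
    {y : lp (fun _ : ℤ => E) p} (h_nat : ∀ n : ℕ, y n = x n) (h_neg : ∀ m < 0, y m = 0) :
    y = ι x := by
  ext m
  rcases lt_or_ge m 0 with hm | hm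
  · rw [h_neg m hm, hι.apply_of_neg x m hm]
  · lift m to ℕ using hm
    rw [h_nat, hι.apply_natCast]

theorem apply_single (hι : IsExtensionByZero ι) (n : ℕ) (a : E) :
    lp.single p (n : ℤ) a = ι (lp.single p n a) := by
  refine hι.eq_apply (fun k => ?_) fun m hm => ?_
  · simp [Pi.single_apply]
  · exact lp.single_apply_ne p _ _ (by omega)

theorem diagonal_apply (hι : IsExtensionByZero ι) {A : E → E} (hA : A 0 = 0)
    {B : lp (fun _ : ℕ => E) p → lp (fun _ : ℕ => E) p}
    {C : lp (fun _ : ℤ => E) p → lp (fun _ : ℤ => E) p} (hB : ∀ x n, B x n = A (x n))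
    (hC : ∀ x n, C x n = A (x n)) (x : lp (fun _ : ℕ => E) p) : C (ι x) = ι (B x) := by
  refine hι.eq_apply (fun n => ?_) fun m hm => ?_
  · rw [hC, hB, hι.apply_natCast]
  · rw [hC, hι.apply_of_neg x m hm, hA]

theorem bilateralShift_apply {𝕜 : Type*} [NormedField 𝕜] [NormedSpace 𝕜 E] [Fact (1 ≤ p)]
    (hι : IsExtensionByZero ι) {S : lp (fun _ : ℕ => E) p → lp (fun _ : ℕ => E) p}
    (hS : ∀ x, S x 0 = 0 ∧ ∀ n : ℕ, S x (n + 1) = x n) (x : lp (fun _ : ℕ => E) p) :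
    bilateralShift 𝕜 E p (ι x) = ι (S x) := by
  refine hι.eq_apply (fun n => ?_) fun m hm => ?_
  · rw [_root_.bilateralShift_apply]
    cases n with
    | zero => rw [(hS x).1, hι.apply_of_neg x _ (by simp)]
    | succ n => rw [(hS x).2, Nat.cast_succ, add_sub_cancel_right, hι.apply_natCast]
  · rw [_root_.bilateralShift_apply, hι.apply_of_neg x _ (by omega)]

end Function

theorem isMinimalUnitaryExtension {𝕜 : Type*} [RCLike 𝕜] {E : Type*} [NormedAddCommGroup E]
    [InnerProductSpace 𝕜 E] {ι : lp (fun _ : ℕ => E) 2 →ₗᵢ[𝕜] lp (fun _ : ℤ => E) 2}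
    (hι : IsExtensionByZero ι) {S : lp (fun _ : ℕ => E) 2 →L[𝕜] lp (fun _ : ℕ => E) 2}
    (hS : ∀ x, S x 0 = 0 ∧ ∀ n : ℕ, S x (n + 1) = x n) :
    IsMinimalUnitaryExtension ι S (bilateralShift 𝕜 E 2) where
  map_apply := hι.bilateralShift_apply hS
  eq_top_of_isClosed q hq hιq hVq := by
    refine eq_top_of_forall_single_mem ENNReal.ofNat_ne_top hq fun n a => ?_
    have single_natCast_mem (k : ℕ) : lp.single 2 (k : ℤ) a ∈ q := by
      rw [hι.apply_single]
      exact hιq _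
    induction n using Int.induction_on with
    | zero => exact single_natCast_mem 0
    | succ n => exact single_natCast_mem (n + 1)
    | pred n ih =>
      rw [← bilateralShift_symm_single (𝕜 := 𝕜)]
      exact hVq _ ih

end IsExtensionByZero

end ExtensionByZero

end SequenceSpaces

theorem lifting_to_bilateral_iff
    {𝔏 : Type*} [NormedAddCommGroup 𝔏] [InnerProductSpace ℂ 𝔏] [CompleteSpace 𝔏]
    (A : 𝔏 →L[ℂ] 𝔏) (hAinj : Function.Injective A) (hApos : A.IsPositive)
    (l : ℂ) (hl : l ≠ 0)
    (ι : lp (fun _ : ℕ => 𝔏) 2 →ₗᵢ[ℂ] lp (fun _ : ℤ => 𝔏) 2)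
    (hι₁ : ∀ (x : lp (fun _ : ℕ => 𝔏) 2) (n : ℕ), (ι x) (n : ℤ) = x n)
    (hι₂ : ∀ (x : lp (fun _ : ℕ => 𝔏) 2) (m : ℤ), m < 0 → (ι x) m = 0)
    (AU : lp (fun _ : ℤ => 𝔏) 2 →L[ℂ] lp (fun _ : ℤ => 𝔏) 2)
    (hAU : ∀ (x : lp (fun _ : ℤ => 𝔏) 2) (n : ℤ), (AU x) n = A (x (n - 1)))
    (AI : lp (fun _ : ℕ => 𝔏) 2 →L[ℂ] lp (fun _ : ℕ => 𝔏) 2)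
    (hAI : ∀ (x : lp (fun _ : ℕ => 𝔏) 2) (n : ℕ), (AI x) n = A (x n))
    (IS : lp (fun _ : ℕ => 𝔏) 2 →L[ℂ] lp (fun _ : ℕ => 𝔏) 2)
    (hIS : ∀ x : lp (fun _ : ℕ => 𝔏) 2, (IS x) 0 = 0 ∧ ∀ n : ℕ, (IS x) (n + 1) = x n)
    (X : lp (fun _ : ℕ => 𝔏) 2 →L[ℂ] lp (fun _ : ℕ => 𝔏) 2) :
    (∃ Xhat : lp (fun _ : ℤ => 𝔏) 2 →L[ℂ] lp (fun _ : ℤ => 𝔏) 2,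
        (∀ v, Xhat (ι v) = ι (X v)) ∧ AU ∘L Xhat = l • (Xhat ∘L AU)) ↔
      (AI ∘L X = (‖l‖ : ℂ) • (X ∘L AI) ∧
        IS ∘L X = (l / (‖l‖ : ℂ)) • (X ∘L IS)) := by
  have hι : IsExtensionByZero ι := ⟨hι₁, hι₂⟩
  obtain ⟨C, hC, rfl⟩ := exists_diagonal_comp_bilateralShift hAU
  exact (hι.isMinimalUnitaryExtension hIS).exists_lift_iff
    (isPositive_lp_diagonal (fun _ => hApos) hC) (injective_lp_diagonal (fun _ => hAinj) hC)
    (commute_diagonal_bilateralShift hC) (hι.diagonal_apply (map_zero A) hAI hC) hl
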